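/- Control of u_t by spatial norms: Let (σ, u, β) be a sufficiently regular solution of the scaled perturbed Navier–Stokes–Korteweg system on Ω × (0,T) satisfying the Navier boundary conditions and the density lower bound ρ(t,x) ≥ d > 0 on Ω × (0,T), where ρ = ρ̄ + κ⁻¹σ. Then for all t ∈ (0,T): ‖u_t‖₀ ≲ κ‖(Δ_hσ, ∇_h∂₃σ)‖₀ + (1 + (1 + κ⁻¹‖σ‖₂)‖u‖₁)‖u‖₂ + ‖∇σ‖₁‖∇σ‖₂. -/

import Mathlib

open MeasureTheory Set Filter Topology
open scoped ENNReal

noncomputable section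

abbrev R3 : Type := Fin 3 → ℝ

/-- The slab Ω = ℝ² × (0, h). -/
def slab (hh : ℝ) : Set R3 := {x | x 2 ∈ Set.Ioo 0 hh}

/-- The boundary ∂Ω = ℝ² × {0, h}. -/
def bdry (hh : ℝ) : Set R3 := {x | x 2 = 0 ∨ x 2 = hh}

/-- `i`-th standard basis vector of ℝ³. -/
def unitv (i : Fin 3) : R3 := fun j => if j = i then 1 else 0

/-- spatial partial derivative ∂ᵢ -/
def pd (i : Fin 3) (f : R3 → ℝ) : R3 → ℝ := fun x => fderiv ℝ f x (unitv i)

/-- iterated spatial partial derivatives -/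
def pdL : List (Fin 3) → (R3 → ℝ) → R3 → ℝ
  | [], f => f
  | i :: l, f => pd i (pdL l f)

/-- Laplacian -/
def lap (f : R3 → ℝ) : R3 → ℝ := fun x => ∑ i : Fin 3, pd i (pd i f) x

/-- horizontal Laplacian Δ_h -/
def laph (f : R3 → ℝ) : R3 → ℝ := fun x => pd 0 (pd 0 f) x + pd 1 (pd 1 f) x

/-- time derivative -/
def dt (f : ℝ → R3 → ℝ) : ℝ → R3 → ℝ := fun t x => deriv (fun s => f s x) t

/-- `j`-th component of a time dependent vector field -/
def uc (u : ℝ → R3 → Fin 3 → ℝ) (j : Fin 3) : ℝ → R3 → ℝ := fun t x => u t x j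

/-- squared L²(Ω) norm -/
def L2sq (hh : ℝ) (f : R3 → ℝ) : ℝ := ∫ x in slab hh, (f x) ^ 2

/-- squared Hᵏ(Ω) norm -/
def HSq (hh : ℝ) (k : ℕ) (f : R3 → ℝ) : ℝ :=
  ∑ n ∈ Finset.range (k + 1), ∑ α : Fin n → Fin 3, L2sq hh (pdL (List.ofFn α) f)

/-- Hᵏ(Ω) norm -/
def Hnorm (hh : ℝ) (k : ℕ) (f : R3 → ℝ) : ℝ := Real.sqrt (HSq hh k f)

/-- squared Hᵏ(Ω) norm of a vector field -/
def VHSq (hh : ℝ) (k : ℕ) (w : R3 → Fin 3 → ℝ) : ℝ := ∑ j : Fin 3, HSq hh k (fun x => w x j)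

def VHnorm (hh : ℝ) (k : ℕ) (w : R3 → Fin 3 → ℝ) : ℝ := Real.sqrt (VHSq hh k w)

/-- squared ‖∇w‖ₖ² -/
def GradSq (hh : ℝ) (k : ℕ) (w : R3 → Fin 3 → ℝ) : ℝ :=
  ∑ i : Fin 3, ∑ j : Fin 3, HSq hh k (pd i (fun x => w x j))

def GradNorm (hh : ℝ) (k : ℕ) (w : R3 → Fin 3 → ℝ) : ℝ := Real.sqrt (GradSq hh k w)

/-- iterate of a single partial derivative -/
def pdIter (i : Fin 3) : ℕ → (R3 → ℝ) → R3 → ℝ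
  | 0, f => f
  | n + 1, f => pd i (pdIter i n f)

/-- anisotropic norm ‖f‖_{i,l} = ∑_{α₁+α₂=i} ‖∂₁^{α₁}∂₂^{α₂} f‖_{H^l} -/
def anisoNorm (hh : ℝ) (i l : ℕ) (f : R3 → ℝ) : ℝ :=
  ∑ a ∈ Finset.range (i + 1), Hnorm hh l (pdIter 0 a (pdIter 1 (i - a) f))

/-- equilibrium density ρ̄(x) = x₃ + 1 -/
def rbar : R3 → ℝ := fun x => x 2 + 1

/-- perturbed density ρ = ρ̄ + κ⁻¹ σ -/
def rho (κ : ℝ) (σ : R3 → ℝ) : R3 → ℝ := fun x => rbar x + κ⁻¹ * σ x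

/-- The scaled perturbed incompressible NSK system at time `t` on the slab:
    σ_t + u·∇σ + κu₃ = 0,  ρ(u_t + u·∇u) + ∇β = μΔu − Δσ(κe³ + ∇σ),  div u = 0. -/
def NSK (hh μ κ : ℝ) (σ : ℝ → R3 → ℝ) (u : ℝ → R3 → Fin 3 → ℝ) (β : ℝ → R3 → ℝ)
    (t : ℝ) : Prop :=
  ∀ x ∈ slab hh,
    (dt σ t x + (∑ i : Fin 3, u t x i * pd i (σ t) x) + κ * u t x 2 = 0) ∧
    (∀ j : Fin 3,
      rho κ (σ t) x *
          (dt (uc u j) t x + ∑ i : Fin 3, u t x i * pd i (fun y => u t y j) x)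
        + pd j (β t) x
      = μ * lap (fun y => u t y j) x
        - lap (σ t) x * ((if j = 2 then κ else 0) + pd j (σ t) x)) ∧
    (∑ i : Fin 3, pd i (fun y => u t y i) x = 0)

/-- Navier(-slip) boundary conditions at time `t`. -/
def NavierBC (hh : ℝ) (u : ℝ → R3 → Fin 3 → ℝ) (t : ℝ) : Prop :=
  ∀ x ∈ bdry hh,
    u t x 2 = 0 ∧ pd 2 (fun y => u t y 0) x = 0 ∧ pd 2 (fun y => u t y 1) x = 0

/-- "sufficiently regular" time dependent scalar field: jointly smooth with all
    spatial derivatives (and their time derivatives) square integrable on the slab. -/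
def SReg (hh : ℝ) (f : ℝ → R3 → ℝ) : Prop :=
  ContDiff ℝ (⊤ : ℕ∞) (Function.uncurry f) ∧
  ∀ (t : ℝ) (l : List (Fin 3)),
    IntegrableOn (fun x => (pdL l (f t) x) ^ 2) (slab hh) volume ∧
    IntegrableOn (fun x => (pdL l (dt f t) x) ^ 2) (slab hh) volume

/-- "sufficiently regular" time dependent vector field -/
def VReg (hh : ℝ) (u : ℝ → R3 → Fin 3 → ℝ) : Prop := ∀ j : Fin 3, SReg hh (uc u j)

/-- regular (time independent) data with square integrable derivatives -/
def DReg (hh : ℝ) (f : R3 → ℝ) : Prop :=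
  ContDiff ℝ (⊤ : ℕ∞) f ∧ ∀ l : List (Fin 3), IntegrableOn (fun x => (pdL l f x) ^ 2) (slab hh) volume

/-- boundary conditions defining H³_ρ̄ (note ρ̄' = 1) -/
def BCh3 (hh κ : ℝ) (f : R3 → ℝ) : Prop :=
  ∀ x ∈ bdry hh, f x = 0 ∧ pd 2 (pd 2 f) x = 0 ∧ pd 2 f x = -κ

/-- divergence-free and boundary conditions defining ℋ²ₛ -/
def BCh2s (hh : ℝ) (w : R3 → Fin 3 → ℝ) : Prop :=
  (∀ x ∈ slab hh, ∑ i : Fin 3, pd i (fun y => w y i) x = 0) ∧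
  (∀ x ∈ bdry hh, w x 2 = 0 ∧ pd 2 (fun y => w y 0) x = 0 ∧ pd 2 (fun y => w y 1) x = 0)

/-- continuity in time with values in Hᵏ(Ω) -/
def ContH (hh : ℝ) (k : ℕ) (S : Set ℝ) (f : ℝ → R3 → ℝ) : Prop :=
  ∀ t₀ ∈ S,
    Tendsto (fun t => Hnorm hh k (fun x => f t x - f t₀ x)) (nhdsWithin t₀ S) (𝓝 0)

/-- membership in L²(0,T;Hᵏ) -/
def L2H (hh : ℝ) (k : ℕ) (T : ℝ) (f : ℝ → R3 → ℝ) : Prop :=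
  IntegrableOn (fun t => HSq hh k (f t)) (Set.Ioo 0 T) volume

/-- membership in 𝔓_T -/
def memP (hh κ T : ℝ) (σ : ℝ → R3 → ℝ) : Prop :=
  (∀ t ∈ Set.Icc (0:ℝ) T,
    (∀ l : List (Fin 3), l.length ≤ 3 →
      IntegrableOn (fun x => (pdL l (σ t) x) ^ 2) (slab hh) volume) ∧
    BCh3 hh κ (σ t)) ∧
  ContH hh 3 (Set.Icc 0 T) σ ∧ ContH hh 1 (Set.Icc 0 T) (dt σ) ∧ L2H hh 2 T (dt σ)

/-- membership in 𝒱_T -/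
def memV (hh T : ℝ) (u : ℝ → R3 → Fin 3 → ℝ) : Prop :=
  (∀ t ∈ Set.Icc (0:ℝ) T,
    (∀ (j : Fin 3) (l : List (Fin 3)), l.length ≤ 3 →
      IntegrableOn (fun x => (pdL l (fun y => u t y j) x) ^ 2) (slab hh) volume) ∧
    BCh2s hh (u t)) ∧
  (∀ j : Fin 3, ContH hh 2 (Set.Icc 0 T) (uc u j)) ∧
  (∀ j : Fin 3, L2H hh 3 T (uc u j)) ∧
  (∀ j : Fin 3, ContH hh 0 (Set.Icc 0 T) (dt (uc u j))) ∧
  (∀ j : Fin 3, L2H hh 1 T (dt (uc u j)))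

/-- the energy functional E(t) -/
def Efun (hh κ : ℝ) (σ : ℝ → R3 → ℝ) (u : ℝ → R3 → Fin 3 → ℝ) (t : ℝ) : ℝ :=
  HSq hh 3 (σ t) + VHSq hh 2 (u t) + κ ^ 2 * HSq hh 1 (fun x => u t x 2)
    + κ ^ 2 * (L2sq hh (laph (σ t)) + L2sq hh (pd 0 (pd 2 (σ t)))
        + L2sq hh (pd 1 (pd 2 (σ t))))

/-- E⁰, the energy functional evaluated on initial data -/
def E0fun (hh κ : ℝ) (σ0 : R3 → ℝ) (u0 : R3 → Fin 3 → ℝ) : ℝ :=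
  HSq hh 3 σ0 + VHSq hh 2 u0 + κ ^ 2 * HSq hh 1 (fun x => u0 x 2)
    + κ ^ 2 * (L2sq hh (laph σ0) + L2sq hh (pd 0 (pd 2 σ0)) + L2sq hh (pd 1 (pd 2 σ0)))

/-- the functional ℰ(t) -/
def EE (hh κ : ℝ) (σ : ℝ → R3 → ℝ) (u : ℝ → R3 → Fin 3 → ℝ) (t : ℝ) : ℝ :=
  HSq hh 1 (dt σ t) + (∑ j : Fin 3, L2sq hh (dt (uc u j) t)) + Efun hh κ σ u t

/-- the dissipation functional 𝒟(t) -/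
def DD (hh : ℝ) (σ : ℝ → R3 → ℝ) (u : ℝ → R3 → Fin 3 → ℝ) (t : ℝ) : ℝ :=
  (anisoNorm hh 1 2 (σ t)) ^ 2 + HSq hh 2 (dt σ t) + GradSq hh 2 (u t)
    + ∑ j : Fin 3, HSq hh 1 (dt (uc u j) t)

/-- ‖u_t‖ₖ -/
def utNorm (hh : ℝ) (k : ℕ) (u : ℝ → R3 → Fin 3 → ℝ) (t : ℝ) : ℝ :=
  Real.sqrt (∑ j : Fin 3, HSq hh k (dt (uc u j) t))

/-- embedding of the horizontal indices into Fin 3 -/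
def hi (a : Fin 2) : Fin 3 := ⟨a.1, by omega⟩

/-- good initial data: (σ⁰,u⁰) ∈ H³_ρ̄ × ℋ²ₛ, no vacuum, and smallness of E⁰ -/
def GoodData (hh κ d c₁ c₂ : ℝ) (σ0 : R3 → ℝ) (u0 : R3 → Fin 3 → ℝ) : Prop :=
  DReg hh σ0 ∧ (∀ j : Fin 3, DReg hh (fun x => u0 x j)) ∧
  BCh3 hh κ σ0 ∧ BCh2s hh u0 ∧
  (∀ x ∈ slab hh, d ≤ rbar x + κ⁻¹ * σ0 x) ∧
  E0fun hh κ σ0 u0 ≤ ((3 * c₁ * (max κ⁻¹ c₂) ^ 9)⁻¹) ^ 3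

/-- (σ,u,∇β) is a global strong solution with data (σ⁰,u⁰):
    initial condition, equations and boundary conditions for positive times, and
    (σ,u,∇β) ∈ 𝔓_T × 𝒱_T × C⁰([0,T],L²) for every T > 0. -/
def GlobalSol (hh μ κ : ℝ) (σ0 : R3 → ℝ) (u0 : R3 → Fin 3 → ℝ)
    (σ : ℝ → R3 → ℝ) (u : ℝ → R3 → Fin 3 → ℝ) (β : ℝ → R3 → ℝ) : Prop :=
  (∀ x ∈ slab hh, σ 0 x = σ0 x ∧ ∀ j : Fin 3, u 0 x j = u0 x j) ∧
  (∀ t : ℝ, 0 < t → NSK hh μ κ σ u β t ∧ NavierBC hh u t) ∧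
  (∀ T : ℝ, 0 < T → memP hh κ T σ ∧ memV hh T u ∧
    ∀ j : Fin 3, ContH hh 0 (Set.Icc 0 T) (fun t => pd j (β t)))

end

/-!
Write `Δσ e³ = ∇∂₃σ + q`, where `q` involves only `Δ_hσ` and `∇_h∂₃σ`. The field `u_t` is
divergence-free with vanishing normal component on the boundary, hence orthogonal in `L²(Ω)` to the
gradients `∇β` and `κ∇∂₃σ`. Testing the momentum equation with `u_t` therefore gives
`d ‖u_t‖ ≤ ‖μΔu - ρ u·∇u - Δσ∇σ - κq‖`, and each product on the right is estimated by putting one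
factor in `L^∞` through `H²(Ω) ⊂ L^∞(Ω)`.

For the embedding, average the second-order Taylor formula at `x` over the directions `v` in a cube
`Q` with `x + sv ∈ Ω` for all `0 < s ≤ 1`. Rescaling the `L²` norm of `v ↦ D²f(x + sv)` costs a
factor `s^(-n/2)` in dimension `n`, while the remainder carries the weight `s`, so the averaged
remainder is controlled by `∫₀¹ s^(1 - n/2) ds`, which is finite for `n ≤ 3`.
-/

section Sobolev

variable {E F : Type*} [NormedAddCommGroup E] [NormedSpace ℝ E]
  [NormedAddCommGroup F] [NormedSpace ℝ F]

section Dilation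

variable [FiniteDimensional ℝ E] [MeasurableSpace E] [BorelSpace E]
  (ν : Measure E) [ν.IsAddHaarMeasure]

lemma map_add_smul_addHaar (x : E) {s : ℝ} (hs : s ≠ 0) :
    ν.map (fun v => x + s • v) = ENNReal.ofReal |(s ^ Module.finrank ℝ E)⁻¹| • ν := by
  have hcomp : (fun v : E => x + s • v) = (x + ·) ∘ (s • ·) := rfl
  rw [hcomp, ← Measure.map_map (by fun_prop) (by fun_prop), Measure.map_addHaar_smul ν hs,
    Measure.map_smul, map_add_left_eq_self]

lemma eLpNorm_comp_add_smul_le {G : Type*} [NormedAddCommGroup G] {g : E → G}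
    (hg : Continuous g) {Ω Q : Set E} (hΩ : MeasurableSet Ω) {x : E} {s : ℝ}
    (hs : s ≠ 0) (hsub : ∀ v ∈ Q, x + s • v ∈ Ω) :
    eLpNorm (fun v => g (x + s • v)) 2 (ν.restrict Q) ≤
      ENNReal.ofReal |(s ^ Module.finrank ℝ E)⁻¹| ^ (1 / 2 : ℝ) *
        eLpNorm g 2 (ν.restrict Ω) := by
  set T : E → E := fun v => x + s • v with hT
  have hTmeas : Measurable T := by fun_prop
  calc eLpNorm (g ∘ T) 2 (ν.restrict Q)
      = eLpNorm g 2 ((ν.restrict Q).map T) :=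
        (eLpNorm_map_measure hg.stronglyMeasurable.aestronglyMeasurable hTmeas.aemeasurable).symm
    _ ≤ eLpNorm g 2 ((ν.map T).restrict Ω) := by
        rw [Measure.restrict_map hTmeas hΩ]
        exact eLpNorm_mono_measure g (Measure.map_mono (Measure.restrict_mono hsub le_rfl) hTmeas)
    _ = _ := by
        rw [hT, map_add_smul_addHaar ν x hs, Measure.restrict_smul,
          eLpNorm_smul_measure_of_ne_top (by norm_num)]
        norm_num

end Dilation

lemma eq_sub_add_integral_fderiv_fderiv [CompleteSpace F] {f : E → F} (hf : ContDiff ℝ 2 f)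
    (x v : E) :
    f x = f (x + v) - fderiv ℝ f (x + v) v
      + ∫ s in (0 : ℝ)..1, s • fderiv ℝ (fderiv ℝ f) (x + s • v) v v := by
  have hline (s : ℝ) : HasDerivAt (fun s : ℝ => x + s • v) v s := by
    simpa using ((hasDerivAt_id s).smul_const v).const_add x
  have hf' : ContDiff ℝ 1 (fderiv ℝ f) := hf.fderiv_right (by norm_num)
  have hderiv (s : ℝ) :
      HasDerivAt (fun s : ℝ => f (x + s • v) - s • fderiv ℝ f (x + s • v) v)
        (-(s • fderiv ℝ (fderiv ℝ f) (x + s • v) v v)) s := by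
    have h₀ := (hf.differentiable two_ne_zero (x + s • v)).hasFDerivAt.comp_hasDerivAt s (hline s)
    have h₁ := (hf'.differentiable one_ne_zero (x + s • v)).hasFDerivAt.comp_hasDerivAt s (hline s)
    refine (h₀.sub ((hasDerivAt_id s).smul (h₁.clm_apply (hasDerivAt_const s v)))).congr_deriv ?_
    simp
  have hcont : Continuous fun s : ℝ => -(s • fderiv ℝ (fderiv ℝ f) (x + s • v) v v) := by
    have := hf'.continuous_fderiv (by norm_num)
    fun_prop
  have hFTC := intervalIntegral.integral_eq_sub_of_hasDerivAt (fun s _ => hderiv s)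
    (hcont.intervalIntegrable 0 1)
  simp only [intervalIntegral.integral_neg, one_smul, zero_smul, add_zero, sub_zero] at hFTC
  rw [neg_eq_iff_eq_neg.mp hFTC]
  abel

lemma enorm_le_of_segment [CompleteSpace F] {f : E → F} (hf : ContDiff ℝ 2 f) (x : E) {v : E}
    (hv : ‖v‖ ≤ 1) :
    ‖f x‖ₑ ≤ ‖f (x + v)‖ₑ + ‖fderiv ℝ f (x + v)‖ₑ
      + ∫⁻ s in Ioc (0 : ℝ) 1, ENNReal.ofReal s * ‖fderiv ℝ (fderiv ℝ f) (x + s • v)‖ₑ := by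
  have hint : ‖∫ s in (0 : ℝ)..1, s • fderiv ℝ (fderiv ℝ f) (x + s • v) v v‖ₑ ≤
      ∫⁻ s in Ioc (0 : ℝ) 1, ENNReal.ofReal s * ‖fderiv ℝ (fderiv ℝ f) (x + s • v)‖ₑ := by
    rw [intervalIntegral.integral_of_le zero_le_one]
    refine (enorm_integral_le_lintegral_enorm _).trans
      (setLIntegral_mono' measurableSet_Ioc fun s hs => ?_)
    rw [enorm_smul, Real.enorm_of_nonneg hs.1.le]
    gcongr
    exact enorm_le_iff_norm_le.mpr
      ((ContinuousLinearMap.unit_le_opNorm _ v hv).trans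
        (ContinuousLinearMap.unit_le_opNorm _ v hv))
  calc ‖f x‖ₑ ≤ ‖f (x + v)‖ₑ + ‖fderiv ℝ f (x + v) v‖ₑ
          + ∫⁻ s in Ioc (0 : ℝ) 1,
              ENNReal.ofReal s * ‖fderiv ℝ (fderiv ℝ f) (x + s • v)‖ₑ := by
        conv_lhs => rw [eq_sub_add_integral_fderiv_fderiv hf x v]
        exact (enorm_add_le _ _).trans (add_le_add enorm_sub_le hint)
    _ ≤ _ := by gcongr; exact enorm_le_iff_norm_le.mpr (ContinuousLinearMap.unit_le_opNorm _ v hv)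

lemma lintegral_ofReal_mul_ofReal_inv_pow_rpow_le {n : ℕ} (hn : n ≤ 3) :
    ∫⁻ s in Ioc (0 : ℝ) 1, ENNReal.ofReal s * ENNReal.ofReal |(s ^ n)⁻¹| ^ (1 / 2 : ℝ) ≤ 2 := by
  have hpt (s : ℝ) (hs : s ∈ Ioc (0 : ℝ) 1) :
      ENNReal.ofReal s * ENNReal.ofReal |(s ^ n)⁻¹| ^ (1 / 2 : ℝ) ≤
        ENNReal.ofReal (s ^ (-(1 / 2) : ℝ)) := by
    have hs0 := hs.1
    rw [abs_of_pos (by positivity), ENNReal.ofReal_rpow_of_nonneg (by positivity) (by norm_num),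
      ← ENNReal.ofReal_mul hs0.le]
    refine ENNReal.ofReal_le_ofReal ?_
    rw [← Real.rpow_natCast s n, ← Real.rpow_neg hs0.le, ← Real.rpow_mul hs0.le]
    nth_rw 1 [← Real.rpow_one s]
    rw [← Real.rpow_add hs0]
    refine Real.rpow_le_rpow_of_exponent_ge hs0 hs.2 ?_
    have : (n : ℝ) ≤ 3 := by exact_mod_cast hn
    linarith
  refine (setLIntegral_mono' measurableSet_Ioc hpt).trans ?_
  rw [← ofReal_integral_eq_lintegral_ofReal]
  · rw [← intervalIntegral.integral_of_le zero_le_one, integral_rpow (by norm_num)]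
    norm_num
  · exact (intervalIntegrable_iff_integrableOn_Ioc_of_le zero_le_one).mp
      (intervalIntegral.intervalIntegrable_rpow' (by norm_num))
  · exact (ae_restrict_mem measurableSet_Ioc).mono fun s hs => Real.rpow_nonneg hs.1.le _

variable [FiniteDimensional ℝ E] [MeasurableSpace E] [BorelSpace E]
  (ν : Measure E) [ν.IsAddHaarMeasure]

lemma lintegral_enorm_comp_add_smul_le {G : Type*} [NormedAddCommGroup G] {g : E → G}
    (hg : Continuous g) {Ω Q : Set E} (hΩ : MeasurableSet Ω) {x : E} {s : ℝ}
    (hs : s ≠ 0) (hsub : ∀ v ∈ Q, x + s • v ∈ Ω) :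
    ∫⁻ v in Q, ‖g (x + s • v)‖ₑ ∂ν ≤
      ENNReal.ofReal |(s ^ Module.finrank ℝ E)⁻¹| ^ (1 / 2 : ℝ) *
        (eLpNorm g 2 (ν.restrict Ω) * ν Q ^ (1 / 2 : ℝ)) := by
  have hcont : Continuous fun v => g (x + s • v) := by fun_prop
  have hHolder := eLpNorm_le_eLpNorm_mul_rpow_measure_univ (p := 1) (q := 2) (by norm_num)
    (hcont.stronglyMeasurable.aestronglyMeasurable (μ := ν.restrict Q))
  rw [eLpNorm_one_eq_lintegral_enorm, Measure.restrict_apply_univ] at hHolder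
  norm_num at hHolder
  rw [← mul_assoc]
  exact hHolder.trans (mul_le_mul_left (eLpNorm_comp_add_smul_le ν hg hΩ hs hsub) _)

lemma lintegral_segment_le {G : Type*} [NormedAddCommGroup G] {g : E → G} (hg : Continuous g)
    (hdim : Module.finrank ℝ E ≤ 3) {Ω Q : Set E} (hΩ : MeasurableSet Ω) {x : E}
    (hcone : ∀ v ∈ Q, ∀ s ∈ Ioc (0 : ℝ) 1, x + s • v ∈ Ω) :
    ∫⁻ v in Q, (∫⁻ s in Ioc (0 : ℝ) 1, ENNReal.ofReal s * ‖g (x + s • v)‖ₑ) ∂ν ≤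
      2 * (eLpNorm g 2 (ν.restrict Ω) * ν Q ^ (1 / 2 : ℝ)) := by
  have hcont : Continuous fun p : E × ℝ => ‖g (x + p.2 • p.1)‖ₑ := by fun_prop
  rw [lintegral_lintegral_swap
    ((by fun_prop : Measurable fun p : E × ℝ => ENNReal.ofReal p.2).mul
      hcont.measurable).aemeasurable]
  calc ∫⁻ s in Ioc (0 : ℝ) 1, (∫⁻ v in Q, ENNReal.ofReal s * ‖g (x + s • v)‖ₑ ∂ν)
      ≤ ∫⁻ s in Ioc (0 : ℝ) 1,
          ENNReal.ofReal s * ENNReal.ofReal |(s ^ Module.finrank ℝ E)⁻¹| ^ (1 / 2 : ℝ) *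
            (eLpNorm g 2 (ν.restrict Ω) * ν Q ^ (1 / 2 : ℝ)) := by
        refine setLIntegral_mono' measurableSet_Ioc fun s hs => ?_
        rw [lintegral_const_mul' _ _ ENNReal.ofReal_ne_top, mul_assoc]
        exact mul_le_mul_right (lintegral_enorm_comp_add_smul_le ν hg hΩ hs.1.ne'
          fun v hv => hcone v hv s hs) _
    _ ≤ _ := by
        rw [lintegral_mul_const _ (by fun_prop)]
        exact mul_le_mul_left (lintegral_ofReal_mul_ofReal_inv_pow_rpow_le hdim) _

lemma enorm_mul_measure_le_of_cone [CompleteSpace F] {f : E → F} (hf : ContDiff ℝ 2 f)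
    (hdim : Module.finrank ℝ E ≤ 3) {Ω Q : Set E} (hΩ : MeasurableSet Ω)
    (hQm : MeasurableSet Q) {x : E} (hQ : Q ⊆ Metric.closedBall 0 1)
    (hcone : ∀ v ∈ Q, ∀ s ∈ Ioc (0 : ℝ) 1, x + s • v ∈ Ω) :
    ‖f x‖ₑ * ν Q ≤ (eLpNorm f 2 (ν.restrict Ω) + eLpNorm (fderiv ℝ f) 2 (ν.restrict Ω)
      + 2 * eLpNorm (fderiv ℝ (fderiv ℝ f)) 2 (ν.restrict Ω)) * ν Q ^ (1 / 2 : ℝ) := by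
  have hf₀ : Continuous f := hf.continuous
  have hf₁ : Continuous (fderiv ℝ f) := hf.continuous_fderiv two_ne_zero
  have hf₂ : Continuous (fderiv ℝ (fderiv ℝ f)) :=
    (hf.fderiv_right (m := 1) (by norm_num)).continuous_fderiv one_ne_zero
  have hcurv := lintegral_segment_le ν (G := E →L[ℝ] E →L[ℝ] F) hf₂ hdim hΩ hcone
  have hend {v : E} (hv : v ∈ Q) : x + (1 : ℝ) • v ∈ Ω := hcone v hv 1 ⟨one_pos, le_rfl⟩
  have hvalue := lintegral_enorm_comp_add_smul_le ν hf₀ hΩ one_ne_zero fun _ => hend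
  have hslope := lintegral_enorm_comp_add_smul_le ν hf₁ hΩ one_ne_zero fun _ => hend
  simp only [one_smul, one_pow, inv_one, abs_one, ENNReal.ofReal_one, ENNReal.one_rpow,
    one_mul] at hvalue hslope
  have hm₀ : Measurable fun v => ‖f (x + v)‖ₑ :=
    (by fun_prop : Continuous fun v => ‖f (x + v)‖ₑ).measurable
  have hm₁ : Measurable fun v => ‖fderiv ℝ f (x + v)‖ₑ :=
    (by fun_prop : Continuous fun v => ‖fderiv ℝ f (x + v)‖ₑ).measurable
  calc ‖f x‖ₑ * ν Q = ∫⁻ _ in Q, ‖f x‖ₑ ∂ν := (setLIntegral_const _ _).symm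
    _ ≤ ∫⁻ v in Q, (‖f (x + v)‖ₑ + ‖fderiv ℝ f (x + v)‖ₑ + ∫⁻ s in Ioc (0 : ℝ) 1,
          ENNReal.ofReal s * ‖fderiv ℝ (fderiv ℝ f) (x + s • v)‖ₑ) ∂ν :=
        setLIntegral_mono' hQm fun v hv =>
          enorm_le_of_segment hf x (mem_closedBall_zero_iff.mp (hQ hv))
    _ ≤ _ := by
        rw [lintegral_add_left (by exact hm₀.add hm₁), lintegral_add_left hm₀, add_mul, add_mul,
          mul_assoc]
        gcongr

end Sobolev

section LTwo

variable {α : Type*} {m : MeasurableSpace α} {μ : Measure α}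

lemma sqrt_integral_sq_eq_lpNorm {f : α → ℝ} (hf : MemLp f 2 μ) :
    √(∫ x, f x ^ 2 ∂μ) = lpNorm f 2 μ := by
  rw [lpNorm_eq_integral_norm_rpow_toReal two_ne_zero ENNReal.ofNat_ne_top hf.1,
    Real.sqrt_eq_rpow]
  norm_num

lemma lpNorm_two_sq {f : α → ℝ} (hf : MemLp f 2 μ) : lpNorm f 2 μ ^ 2 = ∫ x, f x ^ 2 ∂μ := by
  rw [← sqrt_integral_sq_eq_lpNorm hf, Real.sq_sqrt (integral_nonneg fun _ => sq_nonneg _)]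

lemma memLp_mul_of_abs_le {f g : α → ℝ} {p : ℝ≥0∞} {M : ℝ} (hf : AEStronglyMeasurable f μ)
    (hM : ∀ᵐ x ∂μ, |f x| ≤ M) (hg : MemLp g p μ) : MemLp (fun x => f x * g x) p μ :=
  hg.of_le_mul (hf.mul hg.1) <| hM.mono fun x hx => by
    rw [norm_mul]; exact mul_le_mul_of_nonneg_right hx (norm_nonneg _)

lemma lpNorm_mul_le_of_abs_le {f g : α → ℝ} {p : ℝ≥0∞} {M : ℝ} (hM₀ : 0 ≤ M)
    (hf : AEStronglyMeasurable f μ) (hM : ∀ᵐ x ∂μ, |f x| ≤ M) (hg : MemLp g p μ) :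
    lpNorm (fun x => f x * g x) p μ ≤ M * lpNorm g p μ := by
  rw [← toReal_eLpNorm (memLp_mul_of_abs_le hf hM hg).1, ← toReal_eLpNorm hg.1,
    ← ENNReal.toReal_ofReal_mul _ _ hM₀]
  refine ENNReal.toReal_mono (ENNReal.mul_ne_top ENNReal.ofReal_ne_top hg.2.ne) ?_
  exact eLpNorm_le_mul_eLpNorm_of_ae_le_mul (hM.mono fun x hx => by
    rw [norm_mul]; exact mul_le_mul_of_nonneg_right hx (norm_nonneg _)) p

lemma eLpNorm_le_sum_of_norm_le {ι F G : Type*} [NormedAddCommGroup F] [NormedAddCommGroup G]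
    {f : α → F} {g : ι → α → G} {s : Finset ι} {p : ℝ≥0∞} (hp : 1 ≤ p)
    (hg : ∀ i ∈ s, AEStronglyMeasurable (g i) μ) (hfg : ∀ x, ‖f x‖ ≤ ∑ i ∈ s, ‖g i x‖) :
    eLpNorm f p μ ≤ ∑ i ∈ s, eLpNorm (g i) p μ := by
  calc eLpNorm f p μ ≤ eLpNorm (∑ i ∈ s, fun x => ‖g i x‖) p μ :=
        eLpNorm_mono_real fun x => by simpa only [Finset.sum_apply] using hfg x
    _ ≤ ∑ i ∈ s, eLpNorm (fun x => ‖g i x‖) p μ :=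
        eLpNorm_sum_le (fun i hi => (hg i hi).norm) hp
    _ = _ := by simp only [eLpNorm_norm]

end LTwo

lemma norm_le_sum_norm_apply_single {ι F : Type*} [Fintype ι] [DecidableEq ι]
    [NormedAddCommGroup F] [NormedSpace ℝ F] (L : (ι → ℝ) →L[ℝ] F) :
    ‖L‖ ≤ ∑ i, ‖L (Pi.single i 1)‖ := by
  refine L.opNorm_le_bound (Finset.sum_nonneg fun _ _ => norm_nonneg _) fun v => ?_
  have hv : v = ∑ i, v i • (Pi.single i 1 : ι → ℝ) := by
    simpa using (pi_eq_sum_univ' v)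
  calc ‖L v‖ = ‖∑ i, v i • L (Pi.single i 1)‖ := by
        conv_lhs => rw [hv, map_sum]
        simp only [map_smul]
    _ ≤ ∑ i, ‖v‖ * ‖L (Pi.single i 1)‖ := norm_sum_le_of_le _ fun i _ => by
        rw [norm_smul]; gcongr; exact norm_le_pi_norm v i
    _ = _ := by rw [Finset.sum_mul]; simp only [mul_comm]

lemma unitv_eq_single (i : Fin 3) : unitv i = Pi.single i 1 := by
  ext j; simp [unitv, Pi.single_apply]

lemma norm_fderiv_le_sum_pd (f : R3 → ℝ) (x : R3) : ‖fderiv ℝ f x‖ ≤ ∑ i, ‖pd i f x‖ := by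
  simpa only [pd, unitv_eq_single] using norm_le_sum_norm_apply_single (fderiv ℝ f x)

lemma fderiv_fderiv_apply {f : R3 → ℝ} (hf : ContDiff ℝ 2 f) (x : R3) (i j : Fin 3) :
    fderiv ℝ (fderiv ℝ f) x (unitv i) (unitv j) = pd i (pd j f) x := by
  have hdiff : DifferentiableAt ℝ (fderiv ℝ f) x :=
    (hf.fderiv_right (m := 1) (by norm_num)).differentiable one_ne_zero x
  change _ = fderiv ℝ (fun y => fderiv ℝ f y (unitv j)) x (unitv i)
  rw [fderiv_clm_apply hdiff (differentiableAt_const _)]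
  simp

lemma norm_fderiv_fderiv_le_sum_pd {f : R3 → ℝ} (hf : ContDiff ℝ 2 f) (x : R3) :
    ‖fderiv ℝ (fderiv ℝ f) x‖ ≤ ∑ ij : Fin 3 × Fin 3, ‖pd ij.1 (pd ij.2 f) x‖ := by
  rw [Fintype.sum_prod_type]
  refine (norm_le_sum_norm_apply_single _).trans (Finset.sum_le_sum fun i _ => ?_)
  refine (norm_le_sum_norm_apply_single _).trans_eq (Finset.sum_congr rfl fun j _ => ?_)
  rw [← unitv_eq_single, ← unitv_eq_single, fderiv_fderiv_apply hf]

/-- The restriction of Lebesgue measure to the slab `Ω`. -/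
noncomputable abbrev slabMeasure (hh : ℝ) : Measure R3 := volume.restrict (slab hh)

/-- Classical functions in the Sobolev space `Hᵏ(Ω)`: `f` is of class `Cᵏ` on the whole space and
its partial derivatives of order at most `k` are square integrable on the slab. -/
structure HReg (hh : ℝ) (k : ℕ) (f : R3 → ℝ) : Prop where
  contDiff : ContDiff ℝ k f
  memLp : ∀ l : List (Fin 3), l.length ≤ k → MemLp (pdL l f) 2 (slabMeasure hh)

lemma contDiff_pd {n : WithTop ℕ∞} {f : R3 → ℝ} (hf : ContDiff ℝ (n + 1) f) (i : Fin 3) :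
    ContDiff ℝ n (pd i f) :=
  (hf.fderiv_right le_rfl).clm_apply contDiff_const

lemma pdL_pd (l : List (Fin 3)) (i : Fin 3) (f : R3 → ℝ) : pdL l (pd i f) = pdL (l ++ [i]) f := by
  induction l with
  | nil => rfl
  | cons j l ih => simp only [List.cons_append, pdL, ih]

lemma measurableSet_slab (hh : ℝ) : MeasurableSet (slab hh) :=
  measurableSet_Ioo.preimage (measurable_pi_apply 2)

lemma ae_slabMeasure_of_forall {hh : ℝ} {P : R3 → Prop} (h : ∀ x ∈ slab hh, P x) :
    ∀ᵐ x ∂slabMeasure hh, P x :=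
  (ae_restrict_mem (measurableSet_slab hh)).mono h

lemma contDiff_top_pdL {f : R3 → ℝ} (hf : ContDiff ℝ (⊤ : ℕ∞) f) (l : List (Fin 3)) :
    ContDiff ℝ (⊤ : ℕ∞) (pdL l f) := by
  induction l with
  | nil => exact hf
  | cons i l ih => exact contDiff_pd (by simpa using ih) i

lemma DReg.hReg {hh : ℝ} {f : R3 → ℝ} (hf : DReg hh f) (k : ℕ) : HReg hh k f where
  contDiff := hf.1.of_le (by exact_mod_cast le_top)
  memLp l _ := (memLp_two_iff_integrable_sq
    (contDiff_top_pdL hf.1 l).continuous.aestronglyMeasurable).mpr (hf.2 l)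

namespace HReg

variable {hh : ℝ} {k : ℕ} {f : R3 → ℝ}

lemma mono {n : ℕ} (hf : HReg hh n f) (hkn : k ≤ n) : HReg hh k f where
  contDiff := hf.contDiff.of_le (by exact_mod_cast hkn)
  memLp l hl := hf.memLp l (hl.trans hkn)

lemma memLp_self (hf : HReg hh k f) : MemLp f 2 (slabMeasure hh) := hf.memLp [] (Nat.zero_le _)

lemma aestronglyMeasurable (hf : HReg hh k f) : AEStronglyMeasurable f (slabMeasure hh) :=
  hf.memLp_self.1

lemma pd (hf : HReg hh (k + 1) f) (i : Fin 3) : HReg hh k (pd i f) where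
  contDiff := contDiff_pd (by exact_mod_cast hf.contDiff) i
  memLp l hl := by
    rw [pdL_pd]
    exact hf.memLp _ (by simpa using hl)

lemma memLp_pd (hf : HReg hh (k + 1) f) (i : Fin 3) : MemLp (_root_.pd i f) 2 (slabMeasure hh) :=
  (hf.pd i).memLp_self

end HReg

lemma L2sq_nonneg (hh : ℝ) (f : R3 → ℝ) : 0 ≤ L2sq hh f := integral_nonneg fun _ => sq_nonneg _

lemma L2sq_pdL_le_HSq (hh : ℝ) {k : ℕ} (f : R3 → ℝ) {l : List (Fin 3)} (hl : l.length ≤ k) :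
    L2sq hh (pdL l f) ≤ HSq hh k f := by
  have hinner (n : ℕ) (α : Fin n → Fin 3) : 0 ≤ L2sq hh (pdL (List.ofFn α) f) := L2sq_nonneg _ _
  calc L2sq hh (pdL l f) = L2sq hh (pdL (List.ofFn l.get) f) := by rw [List.ofFn_get]
    _ ≤ ∑ α : Fin l.length → Fin 3, L2sq hh (pdL (List.ofFn α) f) :=
        Finset.single_le_sum (f := fun α : Fin l.length → Fin 3 => L2sq hh (pdL (List.ofFn α) f))
          (fun α _ => hinner _ α) (Finset.mem_univ _)
    _ ≤ HSq hh k f :=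
        Finset.single_le_sum (f := fun n => ∑ α : Fin n → Fin 3, L2sq hh (pdL (List.ofFn α) f))
          (fun n _ => Finset.sum_nonneg fun α _ => hinner n α)
          (Finset.mem_range.mpr (Nat.lt_succ_of_le hl))

lemma HSq_nonneg (hh : ℝ) (k : ℕ) (f : R3 → ℝ) : 0 ≤ HSq hh k f :=
  (L2sq_nonneg hh _).trans (L2sq_pdL_le_HSq hh f (l := []) (Nat.zero_le _))

lemma HSq_zero (hh : ℝ) (f : R3 → ℝ) : HSq hh 0 f = L2sq hh f := by
  simp [HSq, pdL]

lemma HReg.lpNorm_pdL_le {hh : ℝ} {k : ℕ} {f : R3 → ℝ} (hf : HReg hh k f) {l : List (Fin 3)}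
    (hl : l.length ≤ k) : lpNorm (pdL l f) 2 (slabMeasure hh) ≤ Hnorm hh k f := by
  rw [← sqrt_integral_sq_eq_lpNorm (hf.memLp l hl)]
  exact Real.sqrt_le_sqrt (L2sq_pdL_le_HSq hh f hl)

lemma exists_cone_subset_slab {hh : ℝ} {x : R3} (hx : x ∈ slab hh) :
    ∃ b : ℝ, (univ.pi fun _ => Ioo b (b + min 1 (hh / 2))) ⊆ Metric.closedBall (0 : R3) 1 ∧
      ∀ v ∈ univ.pi fun _ : Fin 3 => Ioo b (b + min 1 (hh / 2)),
        ∀ s ∈ Ioc (0 : ℝ) 1, x + s • v ∈ slab hh := by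
  set a := min 1 (hh / 2)
  have ha₁ : a ≤ 1 := min_le_left _ _
  have ha₂ : a ≤ hh / 2 := min_le_right _ _
  have hball {b : ℝ} (hb₀ : -1 ≤ b) (hb₁ : b + a ≤ 1) :
      (univ.pi fun _ => Ioo b (b + a)) ⊆ Metric.closedBall (0 : R3) 1 := fun v hv => by
    refine mem_closedBall_zero_iff.mpr ((pi_norm_le_iff_of_nonneg zero_le_one).mpr fun i => ?_)
    have := hv i (mem_univ i)
    exact abs_le.mpr ⟨by linarith [this.1], by linarith [this.2]⟩
  obtain ⟨hx₀, hx₁⟩ : 0 < x 2 ∧ x 2 < hh := hx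
  rcases lt_or_ge (x 2) (hh / 2) with hlow | hhigh
  · refine ⟨0, hball (by norm_num) (by linarith), fun v hv s hs => ?_⟩
    have hv₂ := hv 2 (mem_univ 2)
    have : s * v 2 ≤ v 2 := mul_le_of_le_one_left hv₂.1.le hs.2
    exact ⟨add_pos hx₀ (mul_pos hs.1 hv₂.1),
      show x 2 + s * v 2 < hh by linarith [hv₂.2]⟩
  · refine ⟨-a, hball (by linarith) (by linarith), fun v hv s hs => ?_⟩
    have hv₂ := hv 2 (mem_univ 2)
    have hneg : v 2 < 0 := by linarith [hv₂.2]
    have : v 2 ≤ s * v 2 := le_mul_of_le_one_left hneg.le hs.2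
    exact ⟨show 0 < x 2 + s * v 2 by linarith [hv₂.1],
      show x 2 + s * v 2 < hh by linarith [mul_neg_of_pos_of_neg hs.1 hneg]⟩

lemma HReg.eLpNorm_pdL_le {hh : ℝ} {k : ℕ} {f : R3 → ℝ} (hf : HReg hh k f) {l : List (Fin 3)}
    (hl : l.length ≤ k) :
    eLpNorm (pdL l f) 2 (slabMeasure hh) ≤ ENNReal.ofReal (Hnorm hh k f) := by
  rw [← ofReal_lpNorm (hf.memLp l hl)]
  exact ENNReal.ofReal_le_ofReal (hf.lpNorm_pdL_le hl)

lemma HReg.eLpNorm_fderiv_le {hh : ℝ} {k : ℕ} {f : R3 → ℝ} (hf : HReg hh (k + 1) f) :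
    eLpNorm (fderiv ℝ f) 2 (slabMeasure hh) ≤ 3 * ENNReal.ofReal (Hnorm hh (k + 1) f) :=
  calc eLpNorm (fderiv ℝ f) 2 (slabMeasure hh)
      ≤ ∑ i, eLpNorm (_root_.pd i f) 2 (slabMeasure hh) :=
        eLpNorm_le_sum_of_norm_le one_le_two (fun i _ => (hf.memLp_pd i).1)
          (norm_fderiv_le_sum_pd f)
    _ ≤ ∑ _i : Fin 3, ENNReal.ofReal (Hnorm hh (k + 1) f) :=
        Finset.sum_le_sum fun i _ => hf.eLpNorm_pdL_le (l := [i]) (by simp)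
    _ = _ := by simp

lemma HReg.eLpNorm_fderiv_fderiv_le {hh : ℝ} {f : R3 → ℝ} (hf : HReg hh 2 f) :
    eLpNorm (fderiv ℝ (fderiv ℝ f)) 2 (slabMeasure hh) ≤ 9 * ENNReal.ofReal (Hnorm hh 2 f) := by
  have hcomponents := eLpNorm_le_sum_of_norm_le (F := R3 →L[ℝ] R3 →L[ℝ] ℝ) one_le_two
    (fun (ij : Fin 3 × Fin 3) _ => ((hf.pd ij.2).memLp_pd ij.1).1)
    (norm_fderiv_fderiv_le_sum_pd hf.contDiff)
  refine hcomponents.trans ?_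
  calc ∑ ij : Fin 3 × Fin 3, eLpNorm (_root_.pd ij.1 (_root_.pd ij.2 f)) 2 (slabMeasure hh)
      ≤ ∑ _ij : Fin 3 × Fin 3, ENNReal.ofReal (Hnorm hh 2 f) :=
        Finset.sum_le_sum fun ij _ => hf.eLpNorm_pdL_le (l := [ij.1, ij.2]) (by simp)
    _ = _ := by simp

/-- A constant for the Sobolev embedding `H²(Ω) ⊂ L^∞(Ω)` of the slab of height `hh`: it is
`22 |Q|^(1/2) / |Q|` for a cube `Q` of side `min 1 (hh / 2)`, where `22 = 1 + 3 + 2 · 9` counts the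
partial derivatives of orders `0`, `1` and `2`, the last with the weight `∫₀¹ s^(-1/2) ds = 2`. -/
noncomputable def sobolevConst (hh : ℝ) : ℝ :=
  22 * (min 1 (hh / 2) ^ 3) ^ (1 / 2 : ℝ) / min 1 (hh / 2) ^ 3

lemma sobolevConst_pos {hh : ℝ} (hhh : 0 < hh) : 0 < sobolevConst hh := by
  have : 0 < min 1 (hh / 2) := lt_min one_pos (half_pos hhh)
  unfold sobolevConst
  positivity

theorem HReg.abs_le_sobolevConst_mul_Hnorm {hh : ℝ} (hhh : 0 < hh) {f : R3 → ℝ}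
    (hf : HReg hh 2 f) {x : R3} (hx : x ∈ slab hh) : |f x| ≤ sobolevConst hh * Hnorm hh 2 f := by
  unfold sobolevConst
  set a := min 1 (hh / 2)
  have ha : 0 < a := lt_min one_pos (half_pos hhh)
  obtain ⟨b, hball, hcone⟩ := exists_cone_subset_slab hx
  have hvol : volume (univ.pi fun _ : Fin 3 => Ioo b (b + a)) = ENNReal.ofReal (a ^ 3) := by
    rw [Real.volume_pi_Ioo, ENNReal.ofReal_pow ha.le]
    simp
  have hnorms : eLpNorm f 2 (slabMeasure hh) + eLpNorm (fderiv ℝ f) 2 (slabMeasure hh)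
      + 2 * eLpNorm (fderiv ℝ (fderiv ℝ f)) 2 (slabMeasure hh) ≤
      ENNReal.ofReal (22 * Hnorm hh 2 f) :=
    calc _ ≤ ENNReal.ofReal (Hnorm hh 2 f) + 3 * ENNReal.ofReal (Hnorm hh 2 f)
          + 2 * (9 * ENNReal.ofReal (Hnorm hh 2 f)) := by
          gcongr
          exacts [hf.eLpNorm_pdL_le (l := []) (Nat.zero_le _), hf.eLpNorm_fderiv_le,
            hf.eLpNorm_fderiv_fderiv_le]
      _ = ENNReal.ofReal (22 * Hnorm hh 2 f) := by
          rw [ENNReal.ofReal_mul (by norm_num)]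
          norm_num
          ring
  have hsobolev := enorm_mul_measure_le_of_cone volume hf.contDiff (by simp)
    (measurableSet_slab hh) (MeasurableSet.univ_pi fun _ => measurableSet_Ioo) hball hcone
  rw [hvol] at hsobolev
  have hreal : |f x| * a ^ 3 ≤ 22 * Hnorm hh 2 f * (a ^ 3) ^ (1 / 2 : ℝ) := by
    rw [← ENNReal.ofReal_le_ofReal_iff (by unfold Hnorm; positivity),
      ENNReal.ofReal_mul (abs_nonneg _), ENNReal.ofReal_mul (by unfold Hnorm; positivity),
      ← ENNReal.ofReal_rpow_of_nonneg (by positivity) (by norm_num), ← Real.norm_eq_abs,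
      ofReal_norm]
    exact hsobolev.trans (mul_le_mul_left hnorms _)
  calc |f x| ≤ 22 * Hnorm hh 2 f * (a ^ 3) ^ (1 / 2 : ℝ) / a ^ 3 :=
        (le_div_iff₀ (by positivity)).mpr hreal
    _ = _ := by ring

section IntegrationByParts

lemma setIntegral_hasLineDerivAt_eq_zero {E F : Type*} [NormedAddCommGroup E] [NormedSpace ℝ E]
    [FiniteDimensional ℝ E] [MeasurableSpace E] [BorelSpace E] [NormedAddCommGroup F]
    [NormedSpace ℝ F] {ν : Measure E} [ν.IsAddHaarMeasure] {Ω : Set E} (hΩ : MeasurableSet Ω)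
    {v : E} (hinv : ∀ x, ∀ s : ℝ, x + s • v ∈ Ω ↔ x ∈ Ω) {φ φ' : E → F}
    (hφ : ∀ x ∈ Ω, HasLineDerivAt ℝ φ (φ' x) x v) (hint : IntegrableOn φ Ω ν)
    (hint' : IntegrableOn φ' Ω ν) : ∫ x in Ω, φ' x ∂ν = 0 := by
  have hderiv (x : E) : HasLineDerivAt ℝ (Ω.indicator φ) (Ω.indicator φ' x) x v := by
    by_cases hx : x ∈ Ω
    · simpa [HasLineDerivAt, indicator, hinv, hx] using hφ x hx
    · simpa [HasLineDerivAt, indicator, hinv, hx] using hasDerivAt_const (0 : ℝ) (0 : F)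
  -- Integrate by parts against the constant function `1`.
  have hparts := integral_bilinear_hasLineDerivAt_right_eq_neg_left_of_integrable (μ := ν)
    (f := fun _ => (1 : ℝ)) (f' := fun _ => 0) (g := Ω.indicator φ) (g' := Ω.indicator φ')
    (B := ContinuousLinearMap.lsmul ℝ ℝ) (by simp)
    (by simpa using (integrable_indicator_iff hΩ).mpr hint')
    (by simpa using (integrable_indicator_iff hΩ).mpr hint)
    (fun x _ => by simpa [HasLineDerivAt] using hasDerivAt_const (0 : ℝ) (1 : ℝ))
    (fun x _ => hderiv x)
  simpa [integral_indicator hΩ] using hparts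

lemma insertNth_eq_add_smul_single {n : ℕ} (i : Fin (n + 1)) (s : ℝ) (y : Fin n → ℝ) :
    i.insertNth (α := fun _ => ℝ) s y =
      i.insertNth (α := fun _ => ℝ) 0 y + s • (Pi.single i 1 : Fin (n + 1) → ℝ) := by
  ext k
  rcases Fin.eq_self_or_eq_succAbove i k with rfl | ⟨j, rfl⟩ <;> simp

lemma setIntegral_fderiv_single_eq_zero {n : ℕ} {i : Fin (n + 1)} {a b : ℝ} (hab : a ≤ b)
    {F : Type*} [NormedAddCommGroup F] [NormedSpace ℝ F] [CompleteSpace F]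
    {φ : (Fin (n + 1) → ℝ) → F} (hφ : ContDiff ℝ 1 φ)
    (hint : IntegrableOn (fun x => fderiv ℝ φ x (Pi.single i 1)) {x | x i ∈ Ioo a b})
    (hface : ∀ x, x i = a ∨ x i = b → φ x = 0) :
    ∫ x in {x | x i ∈ Ioo a b}, fderiv ℝ φ x (Pi.single i 1) = 0 := by
  set e := (MeasurableEquiv.piFinSuccAbove (fun _ : Fin (n + 1) => ℝ) i).symm
  have he : MeasurePreserving e := (volume_preserving_piFinSuccAbove (fun _ => ℝ) i).symm
  have hcoord (s : ℝ) (y : Fin n → ℝ) : e (s, y) i = s := by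
    change i.insertNth (α := fun _ => ℝ) s y i = s
    simp
  have hline (s : ℝ) (y : Fin n → ℝ) : e (s, y) = e (0, y) + s • Pi.single i 1 :=
    insertNth_eq_add_smul_single i s y
  have hpre : e ⁻¹' {x | x i ∈ Ioo a b} = Ioo a b ×ˢ univ := by
    ext ⟨s, y⟩; simp [hcoord]
  have hderiv (y : Fin n → ℝ) (s : ℝ) :
      HasDerivAt (fun s => φ (e (s, y))) (fderiv ℝ φ (e (s, y)) (Pi.single i 1)) s := by
    have hpath : HasDerivAt (fun s => e (s, y)) (Pi.single i 1) s := by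
      rw [funext fun s => hline s y]
      simpa using ((hasDerivAt_id s).smul_const (Pi.single i (1 : ℝ))).const_add (e (0, y))
    exact (hφ.differentiable one_ne_zero _).hasFDerivAt.comp_hasDerivAt s hpath
  have hcont (y : Fin n → ℝ) : Continuous fun s => fderiv ℝ φ (e (s, y)) (Pi.single i 1) := by
    have hpath : Continuous fun s => e (s, y) := by
      rw [funext fun s => hline s y]
      fun_prop
    exact ((hφ.continuous_fderiv one_ne_zero).comp hpath).clm_apply continuous_const
  have hprod : (volume : Measure (ℝ × (Fin n → ℝ))).restrict (Ioo a b ×ˢ univ) =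
      (volume.restrict (Ioo a b)).prod volume := by
    rw [Measure.volume_eq_prod, ← Measure.prod_restrict, Measure.restrict_univ]
  rw [← he.integrableOn_comp_preimage e.measurableEmbedding, hpre] at hint
  unfold IntegrableOn at hint
  rw [← he.setIntegral_preimage_emb e.measurableEmbedding, hpre, hprod,
    integral_prod_symm _ (hprod ▸ hint)]
  refine integral_eq_zero_of_ae (Eventually.of_forall fun y => ?_)
  change ∫ s in Ioo a b, fderiv ℝ φ (e (s, y)) (Pi.single i 1) = 0
  rw [← integral_Ioc_eq_integral_Ioo, ← intervalIntegral.integral_of_le hab,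
    intervalIntegral.integral_eq_sub_of_hasDerivAt (fun s _ => hderiv y s)
      ((hcont y).intervalIntegrable _ _),
    hface _ (Or.inr (hcoord b y)), hface _ (Or.inl (hcoord a y)), sub_zero]

lemma integral_slab_pd_eq_zero {hh : ℝ} (hhh : 0 < hh) {i : Fin 3} {φ : R3 → ℝ}
    (hφ : ContDiff ℝ 1 φ) (hint : IntegrableOn φ (slab hh))
    (hint' : IntegrableOn (pd i φ) (slab hh))
    (hbdry : i = 2 → ∀ x ∈ bdry hh, φ x = 0) : ∫ x in slab hh, pd i φ x = 0 := by
  by_cases hi : i = 2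
  · subst hi
    have hpd : pd 2 φ = fun x => fderiv ℝ φ x (Pi.single 2 1) := by
      funext x; rw [pd, unitv_eq_single]
    rw [hpd] at hint' ⊢
    exact setIntegral_fderiv_single_eq_zero hhh.le hφ hint' (hbdry rfl)
  · refine setIntegral_hasLineDerivAt_eq_zero (v := unitv i) (measurableSet_slab hh)
      (fun x s => ?_) (fun x _ => ?_) hint hint'
    · simp [slab, unitv, Ne.symm hi]
    · exact (hφ.differentiable one_ne_zero x).hasFDerivAt.hasLineDerivAt _

lemma pd_mul {f g : R3 → ℝ} (hf : ContDiff ℝ 1 f) (hg : ContDiff ℝ 1 g) (i : Fin 3) (x : R3) :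
    pd i (fun y => f y * g y) x = pd i f x * g x + f x * pd i g x := by
  unfold pd
  rw [fderiv_fun_mul (hf.differentiable one_ne_zero x) (hg.differentiable one_ne_zero x)]
  simp; ring

theorem integral_gradient_mul_solenoidal_eq_zero {hh : ℝ} (hhh : 0 < hh) {p : R3 → ℝ}
    {w : Fin 3 → R3 → ℝ} (hp : HReg hh 1 p) (hw : ∀ i, HReg hh 1 (w i))
    (hdiv : ∀ x ∈ slab hh, ∑ i, pd i (w i) x = 0) (hbdry : ∀ x ∈ bdry hh, w 2 x = 0) :
    ∫ x in slab hh, ∑ i, pd i p x * w i x = 0 := by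
  have hpd (i : Fin 3) :
      pd i (fun x => p x * w i x) = fun x => pd i p x * w i x + p x * pd i (w i) x :=
    funext (pd_mul hp.contDiff (hw i).contDiff i)
  have hint (i : Fin 3) : IntegrableOn (pd i fun x => p x * w i x) (slab hh) := by
    rw [hpd]
    exact ((hp.memLp_pd i).integrable_mul (hw i).memLp_self).add
      (hp.memLp_self.integrable_mul ((hw i).memLp_pd i))
  calc ∫ x in slab hh, ∑ i, pd i p x * w i x
      = ∫ x in slab hh, ∑ i, pd i (fun x => p x * w i x) x := by
        refine setIntegral_congr_fun (measurableSet_slab hh) fun x hx => ?_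
        simp only [hpd, Finset.sum_add_distrib, ← Finset.mul_sum, hdiv x hx, mul_zero, add_zero]
    _ = ∑ i, ∫ x in slab hh, pd i (fun x => p x * w i x) x :=
        integral_finsetSum _ fun i _ => hint i
    _ = 0 := Finset.sum_eq_zero fun i _ => integral_slab_pd_eq_zero hhh
        (hp.contDiff.mul (hw i).contDiff) (hp.memLp_self.integrable_mul (hw i).memLp_self) (hint i)
        (by rintro rfl x hx; rw [hbdry x hx, mul_zero])

end IntegrationByParts

section ForceBalance

variable {α ι : Type*} [Fintype ι] {m : MeasurableSpace α} {μ : Measure α}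

lemma sq_mul_sq_add_two_mul_le_sq {d r w p f : ℝ} (hd : 0 ≤ d) (hr : d ≤ r)
    (hbalance : r * w + p = f) : d ^ 2 * w ^ 2 + 2 * d * (p * w) ≤ f ^ 2 := by
  have hpower : d * w ^ 2 + p * w ≤ f * w := by
    rw [← hbalance]; nlinarith [mul_le_mul_of_nonneg_right hr (sq_nonneg w)]
  -- Add `(f - d w)² ≥ 0` to `2d` times the power inequality.
  nlinarith [sq_nonneg (f - d * w), mul_le_mul_of_nonneg_left hpower hd]

lemma sq_mul_sum_integral_sq_le {W P F : ι → α → ℝ} {r : α → ℝ} {d : ℝ} (hd : 0 ≤ d)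
    (hW : ∀ j, MemLp (W j) 2 μ) (hP : ∀ j, MemLp (P j) 2 μ) (hF : ∀ j, MemLp (F j) 2 μ)
    (horth : ∫ x, ∑ j, P j x * W j x ∂μ = 0)
    (hbalance : ∀ᵐ x ∂μ, d ≤ r x ∧ ∀ j, r x * W j x + P j x = F j x) :
    d ^ 2 * ∑ j, ∫ x, W j x ^ 2 ∂μ ≤ ∑ j, ∫ x, F j x ^ 2 ∂μ := by
  have hWsq : Integrable (fun x => ∑ j, W j x ^ 2) μ :=
    integrable_finsetSum _ fun j _ => (hW j).integrable_sq
  have hPW : Integrable (fun x => ∑ j, P j x * W j x) μ :=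
    integrable_finsetSum _ fun j _ => (hP j).integrable_mul (hW j)
  calc d ^ 2 * ∑ j, ∫ x, W j x ^ 2 ∂μ
      = ∫ x, (d ^ 2 * ∑ j, W j x ^ 2 + 2 * d * ∑ j, P j x * W j x) ∂μ := by
        rw [integral_add (hWsq.const_mul _) (hPW.const_mul _), integral_const_mul,
          integral_const_mul, horth, integral_finsetSum _ fun j _ => (hW j).integrable_sq]
        ring
    _ ≤ ∫ x, ∑ j, F j x ^ 2 ∂μ := by
        refine integral_mono_ae ((hWsq.const_mul _).add (hPW.const_mul _))
          (integrable_finsetSum _ fun j _ => (hF j).integrable_sq) ?_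
        filter_upwards [hbalance] with x ⟨hr, hx⟩
        simp only [Finset.mul_sum, ← Finset.sum_add_distrib]
        exact Finset.sum_le_sum fun j _ => sq_mul_sq_add_two_mul_le_sq hd hr (hx j)
    _ = ∑ j, ∫ x, F j x ^ 2 ∂μ := integral_finsetSum _ fun j _ => (hF j).integrable_sq

theorem mul_sqrt_sum_integral_sq_le {W P F : ι → α → ℝ} {r : α → ℝ} {d : ℝ} (hd : 0 ≤ d)
    (hW : ∀ j, MemLp (W j) 2 μ) (hP : ∀ j, MemLp (P j) 2 μ) (hF : ∀ j, MemLp (F j) 2 μ)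
    (horth : ∫ x, ∑ j, P j x * W j x ∂μ = 0)
    (hbalance : ∀ᵐ x ∂μ, d ≤ r x ∧ ∀ j, r x * W j x + P j x = F j x) :
    d * √(∑ j, ∫ x, W j x ^ 2 ∂μ) ≤ ∑ j, lpNorm (F j) 2 μ := by
  refine le_of_sq_le_sq ?_ (Finset.sum_nonneg fun j _ => lpNorm_nonneg)
  have hsum : 0 ≤ ∑ j, ∫ x, W j x ^ 2 ∂μ :=
    Finset.sum_nonneg fun j _ => integral_nonneg fun x => sq_nonneg _
  calc (d * √(∑ j, ∫ x, W j x ^ 2 ∂μ)) ^ 2 = d ^ 2 * ∑ j, ∫ x, W j x ^ 2 ∂μ := by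
        rw [mul_pow, Real.sq_sqrt hsum]
    _ ≤ ∑ j, ∫ x, F j x ^ 2 ∂μ := sq_mul_sum_integral_sq_le hd hW hP hF horth hbalance
    _ = ∑ j, lpNorm (F j) 2 μ ^ 2 := Finset.sum_congr rfl fun j _ => (lpNorm_two_sq (hF j)).symm
    _ ≤ (∑ j, lpNorm (F j) 2 μ) ^ 2 :=
        Finset.sum_sq_le_sq_sum_of_nonneg fun j _ => lpNorm_nonneg

end ForceBalance

/-- The field `q` in the decomposition `Δσ e³ = ∇∂₃σ + q`; it only involves the horizontal
quantities `Δ_hσ` and `∇_h∂₃σ`. -/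
noncomputable def capillaryRemainder (σ : R3 → ℝ) (j : Fin 3) : R3 → ℝ :=
  fun x => if j = 2 then laph σ x else -pd j (pd 2 σ) x

lemma ite_lap_eq_pd_pd_add_capillaryRemainder (σ : R3 → ℝ) (j : Fin 3) (x : R3) :
    (if j = 2 then lap σ x else 0) = pd j (pd 2 σ) x + capillaryRemainder σ j x := by
  fin_cases j <;> simp [capillaryRemainder, lap, laph, Fin.sum_univ_three, add_comm]

lemma HReg.memLp_laph {hh : ℝ} {σ : R3 → ℝ} (hσ : HReg hh 2 σ) :
    MemLp (laph σ) 2 (slabMeasure hh) :=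
  ((hσ.pd 0).memLp_pd 0).add ((hσ.pd 1).memLp_pd 1)

lemma HReg.memLp_capillaryRemainder {hh : ℝ} {σ : R3 → ℝ} (hσ : HReg hh 2 σ) (j : Fin 3) :
    MemLp (capillaryRemainder σ j) 2 (slabMeasure hh) := by
  unfold capillaryRemainder
  split_ifs
  · exact hσ.memLp_laph
  · exact ((hσ.pd 2).memLp_pd j).neg

lemma HReg.lpNorm_capillaryRemainder_le {hh : ℝ} {σ : R3 → ℝ} (hσ : HReg hh 2 σ) (j : Fin 3) :
    lpNorm (capillaryRemainder σ j) 2 (slabMeasure hh) ≤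
      √(L2sq hh (laph σ) + L2sq hh (_root_.pd 0 (_root_.pd 2 σ))
        + L2sq hh (_root_.pd 1 (_root_.pd 2 σ))) := by
  rw [← sqrt_integral_sq_eq_lpNorm (hσ.memLp_capillaryRemainder j)]
  change √(L2sq hh (capillaryRemainder σ j)) ≤ _
  have hsq : L2sq hh (capillaryRemainder σ j) =
      if j = 2 then L2sq hh (laph σ) else L2sq hh (_root_.pd j (_root_.pd 2 σ)) := by
    split_ifs with hj <;> simp [capillaryRemainder, L2sq, hj]
  have h₀ := L2sq_nonneg hh (laph σ)
  have h₁ := L2sq_nonneg hh (_root_.pd 0 (_root_.pd 2 σ))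
  have h₂ := L2sq_nonneg hh (_root_.pd 1 (_root_.pd 2 σ))
  rw [hsq]
  refine Real.sqrt_le_sqrt ?_
  fin_cases j <;> simp <;> linarith

section TimeDerivative

variable {E F : Type*} [NormedAddCommGroup E] [NormedSpace ℝ E] [NormedAddCommGroup F]
  [NormedSpace ℝ F] {f : ℝ → E → F}

lemma deriv_eq_fderiv_uncurry {t : ℝ} {x : E}
    (hf : DifferentiableAt ℝ (Function.uncurry f) (t, x)) :
    deriv (fun s => f s x) t = fderiv ℝ (Function.uncurry f) (t, x) (1, 0) := by
  have hpath := hf.hasFDerivAt.comp_hasDerivAt t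
    ((hasDerivAt_id t).prodMk (hasDerivAt_const t x))
  exact hpath.deriv

lemma fderiv_apply_eq_fderiv_uncurry {t : ℝ} {x : E}
    (hf : DifferentiableAt ℝ (Function.uncurry f) (t, x)) (v : E) :
    fderiv ℝ (f t) x v = fderiv ℝ (Function.uncurry f) (t, x) (0, v) := by
  have hslice : fderiv ℝ (f t) x = _ :=
    (hf.hasFDerivAt.comp x (hasFDerivAt_prodMk_right t x)).fderiv
  rw [hslice]
  simp

lemma hasDerivAt_fderiv_apply (hf : ContDiff ℝ 2 (Function.uncurry f)) (t : ℝ) (x v : E) :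
    HasDerivAt (fun s => fderiv ℝ (f s) x v)
      (fderiv ℝ (fun y => deriv (fun s => f s y) t) x v) t := by
  set Φ := Function.uncurry f
  have hΦ (z : ℝ × E) : DifferentiableAt ℝ Φ z := hf.differentiable two_ne_zero z
  have hΦ' : DifferentiableAt ℝ (fderiv ℝ Φ) (t, x) :=
    (hf.fderiv_right (m := 1) (by norm_num)).differentiable one_ne_zero _
  have hsymm : IsSymmSndFDerivAt ℝ Φ (t, x) := hf.contDiffAt.isSymmSndFDerivAt (by simp)
  have hmixed : fderiv ℝ (fun y => deriv (fun s => f s y) t) x v =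
      fderiv ℝ (fderiv ℝ Φ) (t, x) (0, v) (1, 0) := by
    have hslice := (hΦ'.hasFDerivAt.comp x (hasFDerivAt_prodMk_right t x)).clm_apply
      (hasFDerivAt_const ((1 : ℝ), (0 : E)) x)
    rw [funext fun y => deriv_eq_fderiv_uncurry (f := f) (hΦ (t, y))]
    simpa using DFunLike.congr_fun hslice.fderiv v
  rw [hmixed, hsymm.eq, funext fun s => fderiv_apply_eq_fderiv_uncurry (f := f) (hΦ (s, x)) v]
  have hpath := hΦ'.hasFDerivAt.comp_hasDerivAt t
    ((hasDerivAt_id t).prodMk (hasDerivAt_const t x))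
  simpa using hpath.clm_apply (hasDerivAt_const t ((0 : ℝ), v))

end TimeDerivative

lemma sum_pd_dt_eq_zero {f : Fin 3 → ℝ → R3 → ℝ} (hf : ∀ i, ContDiff ℝ 2 (Function.uncurry (f i)))
    {t : ℝ} {x : R3} (h : ∀ᶠ s in 𝓝 t, ∑ i, pd i (f i s) x = 0) :
    ∑ i, pd i (dt (f i) t) x = 0 := by
  have hderiv : HasDerivAt (fun s => ∑ i, pd i (f i s) x) (∑ i, pd i (dt (f i) t) x) t :=
    HasDerivAt.fun_sum fun i _ => hasDerivAt_fderiv_apply (hf i) t x (unitv i)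
  rw [← hderiv.deriv, Filter.EventuallyEq.deriv_eq h, deriv_const]

lemma SReg.dReg {hh : ℝ} {f : ℝ → R3 → ℝ} (hf : SReg hh f) (t : ℝ) : DReg hh (f t) :=
  ⟨hf.1.comp (contDiff_const.prodMk contDiff_id), fun l => (hf.2 t l).1⟩

lemma SReg.dReg_dt {hh : ℝ} {f : ℝ → R3 → ℝ} (hf : SReg hh f) (t : ℝ) : DReg hh (dt f t) := by
  refine ⟨?_, fun l => (hf.2 t l).2⟩
  have hdt : dt f t = fun x => fderiv ℝ (Function.uncurry f) (t, x) (1, 0) :=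
    funext fun x => deriv_eq_fderiv_uncurry (hf.1.differentiable (by simp) _)
  rw [hdt]
  exact ((hf.1.fderiv_right (by simp)).comp (contDiff_const.prodMk contDiff_id)).clm_apply
    contDiff_const

lemma Hnorm_nonneg (hh : ℝ) (k : ℕ) (f : R3 → ℝ) : 0 ≤ Hnorm hh k f := Real.sqrt_nonneg _

lemma Hnorm_le_sqrt_sum_HSq (hh : ℝ) (k : ℕ) {ι : Type*} [Fintype ι] (f : ι → R3 → ℝ) (i : ι) :
    Hnorm hh k (f i) ≤ √(∑ j, HSq hh k (f j)) :=
  Real.sqrt_le_sqrt <| Finset.single_le_sum (f := fun j => HSq hh k (f j))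
    (fun _ _ => HSq_nonneg hh k _) (Finset.mem_univ i)

lemma Hnorm_le_VHnorm (hh : ℝ) (k : ℕ) (w : R3 → Fin 3 → ℝ) (j : Fin 3) :
    Hnorm hh k (fun x => w x j) ≤ VHnorm hh k w :=
  Hnorm_le_sqrt_sum_HSq hh k (fun j x => w x j) j

lemma VHnorm_nonneg (hh : ℝ) (k : ℕ) (w : R3 → Fin 3 → ℝ) : 0 ≤ VHnorm hh k w :=
  Real.sqrt_nonneg _

/-- The directional derivative `w·∇f`. -/
noncomputable def advection (w : R3 → Fin 3 → ℝ) (f : R3 → ℝ) : R3 → ℝ :=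
  fun x => ∑ i, w x i * pd i f x

/-- The part of the force in the momentum equation that is left when the gradients of `β` and
`κ∂₃σ` are moved to the acceleration side. -/
noncomputable def nonGradientForce (μ κ : ℝ) (σ : R3 → ℝ) (w : R3 → Fin 3 → ℝ) (j : Fin 3) :
    R3 → ℝ :=
  fun x => μ * lap (fun y => w y j) x - rho κ σ x * advection w (fun y => w y j) x
    - lap σ x * pd j σ x - κ * capillaryRemainder σ j x

section ForceBounds

variable {hh κ : ℝ} {σ f : R3 → ℝ} {w : R3 → Fin 3 → ℝ}

lemma HReg.memLp_lap (hf : HReg hh 2 f) : MemLp (lap f) 2 (slabMeasure hh) :=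
  memLp_finsetSum _ fun i _ => (hf.pd i).memLp_pd i

lemma HReg.lpNorm_lap_le_sum (hf : HReg hh 2 f) :
    lpNorm (lap f) 2 (slabMeasure hh) ≤
      ∑ i, lpNorm (_root_.pd i (_root_.pd i f)) 2 (slabMeasure hh) := by
  have hlap : lap f = ∑ i, _root_.pd i (_root_.pd i f) := by ext x; simp [lap]
  rw [hlap]
  exact lpNorm_sum_le (fun i _ => (hf.pd i).memLp_pd i) one_le_two

lemma HReg.lpNorm_lap_le (hf : HReg hh 2 f) :
    lpNorm (lap f) 2 (slabMeasure hh) ≤ 3 * Hnorm hh 2 f :=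
  calc lpNorm (lap f) 2 (slabMeasure hh) ≤ ∑ _i : Fin 3, Hnorm hh 2 f :=
        hf.lpNorm_lap_le_sum.trans <|
          Finset.sum_le_sum fun i _ => hf.lpNorm_pdL_le (l := [i, i]) (by simp)
    _ = 3 * Hnorm hh 2 f := by simp

lemma HReg.lpNorm_lap_le_gradient (hf : HReg hh 2 f) :
    lpNorm (lap f) 2 (slabMeasure hh) ≤ 3 * √(∑ i, HSq hh 1 (_root_.pd i f)) :=
  calc lpNorm (lap f) 2 (slabMeasure hh)
      ≤ ∑ _i : Fin 3, √(∑ i, HSq hh 1 (_root_.pd i f)) :=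
        hf.lpNorm_lap_le_sum.trans <| Finset.sum_le_sum fun i _ =>
          ((hf.pd i).lpNorm_pdL_le (l := [i]) (by simp)).trans
            (Hnorm_le_sqrt_sum_HSq hh 1 (fun i => _root_.pd i f) i)
    _ = _ := by simp

lemma HReg.abs_rho_le (hhh : 0 < hh) (hκ : 0 < κ) (hσ : HReg hh 2 σ) {x : R3}
    (hx : x ∈ slab hh) : |rho κ σ x| ≤ 1 + hh + sobolevConst hh * (κ⁻¹ * Hnorm hh 2 σ) := by
  have hrbar : |rbar x| ≤ 1 + hh := by
    obtain ⟨hx₀, hx₁⟩ : 0 < x 2 ∧ x 2 < hh := hx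
    rw [rbar, abs_of_pos (by linarith)]
    linarith
  have hσx : |κ⁻¹ * σ x| ≤ κ⁻¹ * (sobolevConst hh * Hnorm hh 2 σ) := by
    rw [abs_mul, abs_of_pos (inv_pos.mpr hκ)]
    gcongr
    exact hσ.abs_le_sobolevConst_mul_Hnorm hhh hx
  calc |rho κ σ x| ≤ |rbar x| + |κ⁻¹ * σ x| := abs_add_le _ _
    _ ≤ 1 + hh + κ⁻¹ * (sobolevConst hh * Hnorm hh 2 σ) := add_le_add hrbar hσx
    _ = _ := by ring

lemma continuous_rho (hσ : Continuous σ) : Continuous (rho κ σ) := by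
  unfold rho rbar
  fun_prop

lemma abs_apply_le_sobolevConst_mul_VHnorm (hhh : 0 < hh)
    (hw : ∀ i, HReg hh 2 fun x => w x i) (i : Fin 3) {x : R3} (hx : x ∈ slab hh) :
    |w x i| ≤ sobolevConst hh * VHnorm hh 2 w :=
  ((hw i).abs_le_sobolevConst_mul_Hnorm hhh hx).trans <|
    mul_le_mul_of_nonneg_left (Hnorm_le_VHnorm hh 2 w i) (sobolevConst_pos hhh).le

lemma memLp_advection (hhh : 0 < hh) (hw : ∀ i, HReg hh 2 fun x => w x i) (hf : HReg hh 1 f) :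
    MemLp (advection w f) 2 (slabMeasure hh) :=
  memLp_finsetSum _ fun i _ => memLp_mul_of_abs_le (hw i).aestronglyMeasurable
    (ae_slabMeasure_of_forall fun _ => abs_apply_le_sobolevConst_mul_VHnorm hhh hw i)
    (hf.memLp_pd i)

lemma lpNorm_advection_le (hhh : 0 < hh) (hw : ∀ i, HReg hh 2 fun x => w x i)
    (hf : HReg hh 1 f) :
    lpNorm (advection w f) 2 (slabMeasure hh) ≤
      3 * (sobolevConst hh * VHnorm hh 2 w * Hnorm hh 1 f) := by
  set B := sobolevConst hh * VHnorm hh 2 w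
  have hB : 0 ≤ B := mul_nonneg (sobolevConst_pos hhh).le (VHnorm_nonneg hh 2 w)
  have hw_le (i : Fin 3) : ∀ᵐ x ∂slabMeasure hh, |w x i| ≤ B :=
    ae_slabMeasure_of_forall fun _ => abs_apply_le_sobolevConst_mul_VHnorm hhh hw i
  have hsum : advection w f = ∑ i, fun x => w x i * pd i f x := by ext x; simp [advection]
  calc lpNorm (advection w f) 2 (slabMeasure hh)
      ≤ ∑ i, lpNorm (fun x => w x i * pd i f x) 2 (slabMeasure hh) := by
        rw [hsum]
        exact lpNorm_sum_le (fun i _ => memLp_mul_of_abs_le (hw i).aestronglyMeasurable (hw_le i)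
          (hf.memLp_pd i)) one_le_two
    _ ≤ ∑ _i : Fin 3, B * Hnorm hh 1 f := Finset.sum_le_sum fun i _ =>
        (lpNorm_mul_le_of_abs_le hB (hw i).aestronglyMeasurable (hw_le i) (hf.memLp_pd i)).trans
          (mul_le_mul_of_nonneg_left (hf.lpNorm_pdL_le (l := [i]) (by simp)) hB)
    _ = _ := by simp

lemma memLp_rho_mul (hhh : 0 < hh) (hκ : 0 < κ) (hσ : HReg hh 2 σ)
    (hf : MemLp f 2 (slabMeasure hh)) : MemLp (fun x => rho κ σ x * f x) 2 (slabMeasure hh) :=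
  memLp_mul_of_abs_le (continuous_rho hσ.contDiff.continuous).aestronglyMeasurable
    (ae_slabMeasure_of_forall fun _ => hσ.abs_rho_le hhh hκ) hf

lemma lpNorm_rho_mul_le (hhh : 0 < hh) (hκ : 0 < κ) (hσ : HReg hh 2 σ)
    (hf : MemLp f 2 (slabMeasure hh)) :
    lpNorm (fun x => rho κ σ x * f x) 2 (slabMeasure hh) ≤
      (1 + hh + sobolevConst hh * (κ⁻¹ * Hnorm hh 2 σ)) * lpNorm f 2 (slabMeasure hh) := by
  have hc := sobolevConst_pos hhh
  have hσ_norm := Hnorm_nonneg hh 2 σ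
  exact lpNorm_mul_le_of_abs_le (by positivity)
    (continuous_rho hσ.contDiff.continuous).aestronglyMeasurable
    (ae_slabMeasure_of_forall fun _ => hσ.abs_rho_le hhh hκ) hf

lemma HReg.abs_pd_le (hhh : 0 < hh) (hσ : HReg hh 3 σ) (j : Fin 3) {x : R3} (hx : x ∈ slab hh) :
    |_root_.pd j σ x| ≤ sobolevConst hh * √(∑ i, HSq hh 2 (_root_.pd i σ)) :=
  ((hσ.pd j).abs_le_sobolevConst_mul_Hnorm hhh hx).trans <| mul_le_mul_of_nonneg_left
    (Hnorm_le_sqrt_sum_HSq hh 2 (fun i => _root_.pd i σ) j) (sobolevConst_pos hhh).le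

lemma HReg.memLp_lap_mul_pd (hhh : 0 < hh) (hσ : HReg hh 3 σ) (j : Fin 3) :
    MemLp (fun x => lap σ x * _root_.pd j σ x) 2 (slabMeasure hh) := by
  simp only [mul_comm (lap σ _)]
  exact memLp_mul_of_abs_le (hσ.pd j).aestronglyMeasurable
    (ae_slabMeasure_of_forall fun _ => hσ.abs_pd_le hhh j) (hσ.mono (by norm_num)).memLp_lap

lemma HReg.lpNorm_lap_mul_pd_le (hhh : 0 < hh) (hσ : HReg hh 3 σ) (j : Fin 3) :
    lpNorm (fun x => lap σ x * _root_.pd j σ x) 2 (slabMeasure hh) ≤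
      3 * sobolevConst hh
        * (√(∑ i, HSq hh 1 (_root_.pd i σ)) * √(∑ i, HSq hh 2 (_root_.pd i σ))) := by
  have hσ₂ : HReg hh 2 σ := hσ.mono (by norm_num)
  set B := sobolevConst hh * √(∑ i, HSq hh 2 (_root_.pd i σ)) with hB_def
  have hB : 0 ≤ B := mul_nonneg (sobolevConst_pos hhh).le (Real.sqrt_nonneg _)
  simp only [mul_comm (lap σ _)]
  calc lpNorm (fun x => _root_.pd j σ x * lap σ x) 2 (slabMeasure hh)
      ≤ B * lpNorm (lap σ) 2 (slabMeasure hh) :=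
        lpNorm_mul_le_of_abs_le hB (hσ.pd j).aestronglyMeasurable
          (ae_slabMeasure_of_forall fun _ => hσ.abs_pd_le hhh j) hσ₂.memLp_lap
    _ ≤ B * (3 * √(∑ i, HSq hh 1 (_root_.pd i σ))) :=
        mul_le_mul_of_nonneg_left hσ₂.lpNorm_lap_le_gradient hB
    _ = _ := by rw [hB_def]; ring

end ForceBounds

section Momentum

variable {hh μ κ : ℝ} {σ : R3 → ℝ} {w : R3 → Fin 3 → ℝ}

lemma memLp_nonGradientForce (hhh : 0 < hh) (hκ : 0 < κ) (hσ : HReg hh 3 σ)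
    (hw : ∀ i, HReg hh 2 fun x => w x i) (j : Fin 3) :
    MemLp (nonGradientForce μ κ σ w j) 2 (slabMeasure hh) := by
  have hσ₂ : HReg hh 2 σ := hσ.mono (by norm_num)
  have hadv := memLp_advection hhh hw ((hw j).mono (k := 1) (by norm_num))
  exact ((((hw j).memLp_lap.const_mul μ).sub (memLp_rho_mul hhh hκ hσ₂ hadv)).sub
    (hσ.memLp_lap_mul_pd hhh j)).sub ((hσ₂.memLp_capillaryRemainder j).const_mul κ)

lemma lpNorm_nonGradientForce_le_add (hhh : 0 < hh) (hκ : 0 < κ) (hσ : HReg hh 3 σ)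
    (hw : ∀ i, HReg hh 2 fun x => w x i) (j : Fin 3) :
    lpNorm (nonGradientForce μ κ σ w j) 2 (slabMeasure hh) ≤
      |μ| * lpNorm (lap fun x => w x j) 2 (slabMeasure hh)
        + lpNorm (fun x => rho κ σ x * advection w (fun y => w y j) x) 2 (slabMeasure hh)
        + lpNorm (fun x => lap σ x * pd j σ x) 2 (slabMeasure hh)
        + κ * lpNorm (capillaryRemainder σ j) 2 (slabMeasure hh) := by
  have hσ₂ : HReg hh 2 σ := hσ.mono (by norm_num)
  have hadv := memLp_advection hhh hw ((hw j).mono (k := 1) (by norm_num))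
  have hviscous := (hw j).memLp_lap.const_smul μ
  have hinertial := hviscous.sub (memLp_rho_mul hhh hκ hσ₂ hadv)
  have hcapillary := hinertial.sub (hσ.memLp_lap_mul_pd hhh j)
  have hforce := lpNorm_sub_le hcapillary one_le_two (g := κ • capillaryRemainder σ j)
  have hsplit₁ := lpNorm_sub_le hinertial one_le_two (g := fun x => lap σ x * pd j σ x)
  have hsplit₂ := lpNorm_sub_le hviscous one_le_two
    (g := fun x => rho κ σ x * advection w (fun y => w y j) x)
  rw [lpNorm_const_smul, coe_nnnorm, Real.norm_eq_abs] at hforce hsplit₂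
  rw [abs_of_pos hκ] at hforce
  exact hforce.trans (add_le_add_left (hsplit₁.trans (add_le_add_left hsplit₂ _)) _)

lemma add_force_bounds_le_mul_sum {m c a k s U V G H Q X₁ X₂ X₃ X₄ : ℝ} (hm : 0 ≤ m) (hc : 0 ≤ c)
    (ha : 0 ≤ a) (hs : 0 ≤ s) (hU : 0 ≤ U) (hV : 0 ≤ V) (hGH : 0 ≤ G * H) (hkQ : 0 ≤ k * Q)
    (h₁ : X₁ ≤ 3 * m * V) (h₂ : X₂ ≤ (a + c * s) * (3 * (c * V * U)))
    (h₃ : X₃ ≤ 3 * c * (G * H)) (h₄ : X₄ ≤ k * Q) :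
    X₁ + X₂ + X₃ + X₄ ≤ (1 + 3 * m + 3 * c * (a + c) + 3 * c) *
      (k * Q + (1 + (1 + s) * U) * V + G * H) := by
  set K := 1 + 3 * m + 3 * c * (a + c) + 3 * c
  have hca : 0 ≤ 3 * c * (a + c) := by positivity
  have : 0 ≤ (1 + s) * U * V := by positivity
  have hX₁ : X₁ ≤ K * V := h₁.trans (by gcongr; linarith)
  have hX₂ : X₂ ≤ K * ((1 + s) * U * V) :=
    calc X₂ ≤ (a + c * s) * (3 * (c * V * U)) := h₂
      _ ≤ (a + c) * (1 + s) * (3 * (c * V * U)) := by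
        gcongr
        nlinarith [mul_nonneg ha hs]
      _ = 3 * c * (a + c) * ((1 + s) * U * V) := by ring
      _ ≤ K * ((1 + s) * U * V) := by gcongr; linarith
  have hX₃ : X₃ ≤ K * (G * H) := h₃.trans (by gcongr; linarith)
  have hX₄ : X₄ ≤ K * (k * Q) := h₄.trans (le_mul_of_one_le_left hkQ (by linarith))
  linarith

lemma lpNorm_nonGradientForce_le (hhh : 0 < hh) (hκ : 0 < κ) (hσ : HReg hh 3 σ)
    (hw : ∀ i, HReg hh 2 fun x => w x i) (j : Fin 3) :
    lpNorm (nonGradientForce μ κ σ w j) 2 (slabMeasure hh) ≤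
      (1 + 3 * |μ| + 3 * sobolevConst hh * (1 + hh + sobolevConst hh) + 3 * sobolevConst hh) *
        (κ * √(L2sq hh (laph σ) + L2sq hh (pd 0 (pd 2 σ)) + L2sq hh (pd 1 (pd 2 σ)))
          + (1 + (1 + κ⁻¹ * Hnorm hh 2 σ) * VHnorm hh 1 w) * VHnorm hh 2 w
          + √(∑ i, HSq hh 1 (pd i σ)) * √(∑ i, HSq hh 2 (pd i σ))) := by
  have hσ₂ : HReg hh 2 σ := hσ.mono (by norm_num)
  have hwj : HReg hh 1 fun x => w x j := (hw j).mono (by norm_num)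
  have hc := (sobolevConst_pos hhh).le
  have hσ_norm := Hnorm_nonneg hh 2 σ
  have hw₁ := VHnorm_nonneg hh 1 w
  have hw₂ := VHnorm_nonneg hh 2 w
  refine (lpNorm_nonGradientForce_le_add hhh hκ hσ hw j).trans <|
    add_force_bounds_le_mul_sum (abs_nonneg μ) hc (by positivity) (by positivity) hw₁ hw₂
      (by positivity) (by positivity) ?viscous ?inertial (hσ.lpNorm_lap_mul_pd_le hhh j)
      (mul_le_mul_of_nonneg_left (hσ₂.lpNorm_capillaryRemainder_le j) hκ.le)
  case viscous =>
    calc |μ| * lpNorm (lap fun x => w x j) 2 (slabMeasure hh)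
        ≤ |μ| * (3 * VHnorm hh 2 w) := by
          gcongr
          exact (hw j).lpNorm_lap_le.trans (by gcongr; exact Hnorm_le_VHnorm hh 2 w j)
      _ = 3 * |μ| * VHnorm hh 2 w := by ring
  case inertial =>
    refine (lpNorm_rho_mul_le hhh hκ hσ₂ (memLp_advection hhh hw hwj)).trans ?_
    gcongr
    refine (lpNorm_advection_le hhh hw hwj).trans ?_
    gcongr
    exact Hnorm_le_VHnorm hh 1 w j

theorem mul_sqrt_sum_L2sq_le_of_momentum {d : ℝ} (hhh : 0 < hh) (hd : 0 ≤ d) (hκ : 0 < κ)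
    {β : R3 → ℝ} {W : Fin 3 → R3 → ℝ} (hσ : HReg hh 3 σ) (hβ : HReg hh 1 β)
    (hw : ∀ i, HReg hh 2 fun x => w x i) (hW : ∀ i, HReg hh 1 (W i))
    (hdiv : ∀ x ∈ slab hh, ∑ i, pd i (W i) x = 0) (hbdry : ∀ x ∈ bdry hh, W 2 x = 0)
    (hrho : ∀ x ∈ slab hh, d ≤ rho κ σ x)
    (hmomentum : ∀ x ∈ slab hh, ∀ j,
      rho κ σ x * (W j x + ∑ i, w x i * pd i (fun y => w y j) x) + pd j β x =
        μ * lap (fun y => w y j) x - lap σ x * ((if j = 2 then κ else 0) + pd j σ x)) :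
    d * √(∑ j, L2sq hh (W j)) ≤ ∑ j, lpNorm (nonGradientForce μ κ σ w j) 2 (slabMeasure hh) := by
  have hσ₃ : HReg hh 1 (pd 2 σ) := (hσ.pd 2).mono (by norm_num)
  have hP (j : Fin 3) : MemLp (fun x => pd j β x + κ * pd j (pd 2 σ) x) 2 (slabMeasure hh) :=
    (hβ.memLp_pd j).add ((hσ₃.memLp_pd j).const_mul κ)
  refine mul_sqrt_sum_integral_sq_le hd (fun j => (hW j).memLp_self) hP
    (memLp_nonGradientForce hhh hκ hσ hw) ?orthogonal
    (ae_slabMeasure_of_forall fun x hx => ⟨hrho x hx, fun j => ?balance⟩)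
  case orthogonal =>
    have hint {p : R3 → ℝ} (hp : HReg hh 1 p) :
        Integrable (fun x => ∑ j, pd j p x * W j x) (slabMeasure hh) :=
      integrable_finsetSum _ fun j _ => (hp.memLp_pd j).integrable_mul (hW j).memLp_self
    calc ∫ x in slab hh, ∑ j, (pd j β x + κ * pd j (pd 2 σ) x) * W j x
        = ∫ x in slab hh, (∑ j, pd j β x * W j x + κ * ∑ j, pd j (pd 2 σ) x * W j x) := by
          simp only [add_mul, Finset.sum_add_distrib, mul_assoc, Finset.mul_sum]
      _ = 0 := by
          rw [integral_add (hint hβ) ((hint hσ₃).const_mul κ), integral_const_mul,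
            integral_gradient_mul_solenoidal_eq_zero hhh hβ hW hdiv hbdry,
            integral_gradient_mul_solenoidal_eq_zero hhh hσ₃ hW hdiv hbdry, mul_zero, add_zero]
  case balance =>
    have hcapillary : lap σ x * (if j = 2 then κ else 0) =
        κ * pd j (pd 2 σ) x + κ * capillaryRemainder σ j x := by
      rw [← mul_add, ← ite_lap_eq_pd_pd_add_capillaryRemainder]
      split_ifs <;> ring
    simp only [nonGradientForce, advection]
    linarith [hmomentum x hx j]

end Momentum

theorem ut_control_general (hh μ d : ℝ) (hhh : 0 < hh) (hd : 0 < d) :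
    ∃ C : ℝ, 0 < C ∧ ∀ (κ t : ℝ) (σ β : R3 → ℝ) (u : ℝ → R3 → Fin 3 → ℝ), 0 < κ →
      HReg hh 3 σ → HReg hh 1 β → (∀ j, ContDiff ℝ 2 (Function.uncurry (uc u j))) →
      (∀ j, HReg hh 2 (uc u j t)) → (∀ j, HReg hh 1 (dt (uc u j) t)) →
      (∀ x ∈ slab hh, ∀ᶠ s in 𝓝 t, ∑ i, pd i (uc u i s) x = 0) →
      (∀ x ∈ bdry hh, ∀ᶠ s in 𝓝 t, u s x 2 = 0) →
      (∀ x ∈ slab hh, d ≤ rho κ σ x) →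
      (∀ x ∈ slab hh, ∀ j,
        rho κ σ x * (dt (uc u j) t x + ∑ i, u t x i * pd i (fun y => u t y j) x) + pd j β x =
          μ * lap (fun y => u t y j) x
            - lap σ x * ((if j = 2 then κ else 0) + pd j σ x)) →
      utNorm hh 0 u t ≤ C *
        (κ * √(L2sq hh (laph σ) + L2sq hh (pd 0 (pd 2 σ)) + L2sq hh (pd 1 (pd 2 σ)))
          + (1 + (1 + κ⁻¹ * Hnorm hh 2 σ) * VHnorm hh 1 (u t)) * VHnorm hh 2 (u t)
          + √(∑ i, HSq hh 1 (pd i σ)) * √(∑ i, HSq hh 2 (pd i σ))) := by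
  have hc := sobolevConst_pos hhh
  refine ⟨3 * (1 + 3 * |μ| + 3 * sobolevConst hh * (1 + hh + sobolevConst hh)
    + 3 * sobolevConst hh) / d, by positivity, ?_⟩
  intro κ t σ β u hκ hσ hβ hu hu₂ hut hdiv hbdry hrho hmomentum
  have hutBdry (x : R3) (hx : x ∈ bdry hh) : dt (uc u 2) t x = 0 :=
    (Filter.EventuallyEq.deriv_eq (hbdry x hx)).trans (deriv_const t 0)
  have henergy := mul_sqrt_sum_L2sq_le_of_momentum hhh hd.le hκ hσ hβ hu₂ hut
    (fun x hx => sum_pd_dt_eq_zero hu (hdiv x hx)) hutBdry hrho hmomentum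
  have hforce := Finset.sum_le_sum fun (j : Fin 3) (_ : j ∈ Finset.univ) =>
    lpNorm_nonGradientForce_le (μ := μ) hhh hκ hσ hu₂ j
  rw [Finset.sum_const, Finset.card_univ, Fintype.card_fin, nsmul_eq_mul] at hforce
  simp only [utNorm, HSq_zero]
  rw [div_mul_eq_mul_div, le_div_iff₀ hd, mul_comm, mul_assoc]
  exact henergy.trans hforce

/-- control of u_t by spatial norms, Lemma 2.5, (2.47). -/
theorem ut_control (hh μ d : ℝ)
    (hhh : 0 < hh) (hμ : 0 < μ) (hd : 0 < d) :
    ∃ C : ℝ, 0 < C ∧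
      ∀ (κ T : ℝ), 0 < κ → 0 < T →
      ∀ (σ : ℝ → R3 → ℝ) (u : ℝ → R3 → Fin 3 → ℝ) (β : ℝ → R3 → ℝ),
        SReg hh σ → VReg hh u → SReg hh β →
        (∀ t ∈ Set.Ioo (0:ℝ) T, NSK hh μ κ σ u β t) →
        (∀ t ∈ Set.Ioo (0:ℝ) T, NavierBC hh u t) →
        (∀ t ∈ Set.Ioo (0:ℝ) T, ∀ x ∈ slab hh, d ≤ rho κ (σ t) x) →
        ∀ t ∈ Set.Ioo (0:ℝ) T,
          utNorm hh 0 u t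
            ≤ C * (κ * Real.sqrt (L2sq hh (laph (σ t)) + L2sq hh (pd 0 (pd 2 (σ t)))
                    + L2sq hh (pd 1 (pd 2 (σ t))))
                + (1 + (1 + κ⁻¹ * Hnorm hh 2 (σ t)) * VHnorm hh 1 (u t))
                    * VHnorm hh 2 (u t)
                + Real.sqrt (∑ i : Fin 3, HSq hh 1 (pd i (σ t)))
                    * Real.sqrt (∑ i : Fin 3, HSq hh 2 (pd i (σ t)))) := by
  obtain ⟨C, hC, hbound⟩ := ut_control_general hh μ d hhh hd
  refine ⟨C, hC, fun κ T hκ _ σ u β hσ hu hβ hNSK hBC hρ t ht => ?_⟩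
  have hnhds : Set.Ioo (0 : ℝ) T ∈ 𝓝 t := Ioo_mem_nhds ht.1 ht.2
  exact hbound κ t (σ t) (β t) u hκ ((hσ.dReg t).hReg 3) ((hβ.dReg t).hReg 1)
    (fun j => contDiff_infty.mp (hu j).1 2) (fun j => ((hu j).dReg t).hReg 2)
    (fun j => ((hu j).dReg_dt t).hReg 1)
    (fun x hx => Filter.mem_of_superset hnhds fun s hs => (hNSK s hs x hx).2.2)
    (fun x hx => Filter.mem_of_superset hnhds fun s hs => (hBC s hs x hx).1)
    (hρ t ht) (fun x hx => (hNSK t ht x hx).2.1)
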